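/- Suppose that for ℙ-a.e. ω and all n, sup_x sup_Γ |P_{θ^{−n}ω,n}(x,Γ) − μ_ω(Γ)| ≤ K(ω) a_n with K ∈ L^d(ℙ), where a_n = n^{−β} (case (i)) or a_n = e^{−n^κ} (case (ii)). Then: (i) in the polynomial case, for every ε > 1/d the random variable K̃_ε(ω) = sup_{n≥1} n^{−ε} K(θ^n ω) satisfies K̃_ε ∈ L^d(ℙ) and for ℙ-a.e. ω and all n, sup_x sup_Γ |P_{ω,n}(x,Γ) − μ_{θ^n ω}(Γ)| ≤ K̃_ε(ω) n^{−β+ε}; (ii) in the stretched-exponential case with K ∈ L^q for all q ≥ 1, for every q > 1 and κ′ < κ there exists K̃ ∈ L^q(ℙ) such that for ℙ-a.e. ω and all n, sup_x sup_Γ |P_{ω,n}(x,Γ) − μ_{θ^n ω}(Γ)| ≤ K̃(ω) e^{−n^{κ′}}. -/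

import Mathlib

open MeasureTheory ProbabilityTheory Filter
open scoped ENNReal NNReal

noncomputable section

/-- The `n`-step transition kernels `P_{ω,n} = P_ω ∘ P_{θω} ∘ ⋯ ∘ P_{θ^{n−1}ω}` of a Markov
chain in the random environment `ω` (first apply `P_ω`, then the kernels over the shifted
environments). -/
noncomputable def envKernel {Ω 𝒳 : Type*} [MeasurableSpace Ω] [MeasurableSpace 𝒳]
    (θ : Ω → Ω) (P : Ω → Kernel 𝒳 𝒳) : ℕ → Ω → Kernel 𝒳 𝒳
  | 0, _ => Kernel.id
  | n + 1, ω => (envKernel θ P n (θ ω)) ∘ₖ (P ω)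

/-- Strong mixing of the map `θ` with respect to `ℙ`. -/
def StrongMixing {Ω : Type*} [MeasurableSpace Ω] (Pr : Measure Ω) (θ : Ω → Ω) : Prop :=
  ∀ A B : Set Ω, MeasurableSet A → MeasurableSet B →
    Tendsto (fun n => Pr (A ∩ θ^[n] ⁻¹' B)) atTop (nhds (Pr A * Pr B))

theorem supSet_eq {Ω : Type*} (ε : ℝ) (K : Ω → ℝ) (θ : Ω → Ω) (ω : Ω) :
    {c : ℝ | ∃ n : ℕ, 1 ≤ n ∧ c = (n : ℝ) ^ (-ε) * K (θ^[n] ω)} =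
      Set.range (fun n : ℕ => ((n + 1 : ℕ) : ℝ) ^ (-ε) * K (θ^[n + 1] ω)) := by
  ext c
  constructor
  · rintro ⟨n, hn, rfl⟩
    obtain ⟨m, rfl⟩ : ∃ m, n = m + 1 := ⟨n - 1, by omega⟩
    exact ⟨m, rfl⟩
  · rintro ⟨m, rfl⟩
    exact ⟨m + 1, by omega, rfl⟩

theorem sup_memLp {Ω : Type*} [MeasurableSpace Ω] (Pr : Measure Ω) [IsProbabilityMeasure Pr]
    (θ : Ω → Ω) (hθ : MeasurePreserving θ Pr Pr) (d ε : ℝ) (hd : 1 ≤ d) (hε : 1 / d < ε)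
    (K : Ω → ℝ) (hK0 : ∀ ω, 0 ≤ K ω) (hK : MemLp K (ENNReal.ofReal d) Pr) :
    MemLp (fun ω => sSup {c : ℝ | ∃ n : ℕ, 1 ≤ n ∧ c = (n : ℝ) ^ (-ε) * K (θ^[n] ω)})
      (ENNReal.ofReal d) Pr ∧
    ∀ᵐ ω ∂Pr, ∀ n : ℕ, 1 ≤ n → (n : ℝ) ^ (-ε) * K (θ^[n] ω) ≤
      sSup {c : ℝ | ∃ k : ℕ, 1 ≤ k ∧ c = (k : ℝ) ^ (-ε) * K (θ^[k] ω)} := by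
  have hd0 : 0 < d := by linarith
  have hp0 : ENNReal.ofReal d ≠ 0 := by simpa using hd0
  have hpt : ENNReal.ofReal d ≠ ⊤ := ENNReal.ofReal_ne_top
  have htr : (ENNReal.ofReal d).toReal = d := ENNReal.toReal_ofReal hd0.le
  set f : ℕ → Ω → ℝ := fun n ω => ((n + 1 : ℕ) : ℝ) ^ (-ε) * K (θ^[n + 1] ω) with hf
  have hf0 : ∀ n ω, 0 ≤ f n ω := fun n ω => mul_nonneg (by positivity) (hK0 _)
  have hfm : ∀ n, AEMeasurable (f n) Pr := fun n =>
    (hK.1.aemeasurable.comp_quasiMeasurePreserving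
      (hθ.iterate (n + 1)).quasiMeasurePreserving).const_mul _
  set I : ℝ≥0∞ := ∫⁻ ω, ‖K ω‖ₑ ^ d ∂Pr with hI
  have hIfin : I < ⊤ := by
    have := lintegral_rpow_enorm_lt_top_of_eLpNorm_lt_top hp0 hpt hK.2
    rwa [htr] at this
  have hKm : AEMeasurable (fun ω => ‖K ω‖ₑ ^ d) Pr := hK.1.aemeasurable.enorm.pow_const d
  have hint : ∀ n, ∫⁻ ω, ‖f n ω‖ₑ ^ d ∂Pr
      = ENNReal.ofReal (((n + 1 : ℕ) : ℝ) ^ (-(ε * d))) * I := by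
    intro n
    have hc : ∀ ω, ‖f n ω‖ₑ ^ d = ENNReal.ofReal (((n + 1 : ℕ) : ℝ) ^ (-(ε * d))) *
        ‖K (θ^[n + 1] ω)‖ₑ ^ d := by
      intro ω
      simp only [hf]
      rw [enorm_mul, ENNReal.mul_rpow_of_nonneg _ _ hd0.le,
        Real.enorm_of_nonneg (by positivity : (0:ℝ) ≤ ((n + 1 : ℕ) : ℝ) ^ (-ε)),
        ENNReal.ofReal_rpow_of_nonneg (by positivity) hd0.le, ← Real.rpow_mul (by positivity)]
      congr 3
      ring_nf
    simp_rw [hc]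
    rw [lintegral_const_mul' _ _ ENNReal.ofReal_ne_top]
    congr 1
    have hmp := hθ.iterate (n + 1)
    rw [hI]
    conv_rhs => rw [← hmp.map_eq]
    rw [lintegral_map' (by rw [hmp.map_eq]; exact hKm) hmp.measurable.aemeasurable]
  have hsum : Summable (fun n : ℕ => ((n + 1 : ℕ) : ℝ) ^ (-(ε * d))) := by
    have h1 : -(ε * d) < -1 := by
      have := (div_lt_iff₀ hd0).1 hε
      linarith
    exact (summable_nat_add_iff 1).2 (Real.summable_nat_rpow.2 h1)
  have hFint : ∫⁻ ω, ∑' n, ‖f n ω‖ₑ ^ d ∂Pr < ⊤ := by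
    rw [lintegral_tsum (fun n => (hfm n).enorm.pow_const d)]
    simp_rw [hint]
    rw [ENNReal.tsum_mul_right]
    exact ENNReal.mul_lt_top
      (by rw [← ENNReal.ofReal_tsum_of_nonneg (fun n => by positivity) hsum]
          exact ENNReal.ofReal_lt_top) hIfin
  have hFm : AEMeasurable (fun ω => ∑' n, ‖f n ω‖ₑ ^ d) Pr :=
    AEMeasurable.ennreal_tsum (fun n => (hfm n).enorm.pow_const d)
  have hFfin := ae_lt_top' hFm hFint.ne
  have key : ∀ ω, ∑' n, ‖f n ω‖ₑ ^ d < ⊤ →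
      ∀ n, f n ω ≤ ((∑' n, ‖f n ω‖ₑ ^ d) ^ (1 / d)).toReal := by
    intro ω hω n
    have h1 : ‖f n ω‖ₑ ^ d ≤ ∑' n, ‖f n ω‖ₑ ^ d := ENNReal.le_tsum n
    have h2 : ‖f n ω‖ₑ ≤ (∑' n, ‖f n ω‖ₑ ^ d) ^ (1 / d) := by
      rwa [one_div, ENNReal.le_rpow_inv_iff hd0]
    have h3 : (∑' n, ‖f n ω‖ₑ ^ d) ^ (1 / d) ≠ ⊤ :=
      ENNReal.rpow_ne_top_of_nonneg (by positivity) hω.ne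
    rw [Real.enorm_of_nonneg (hf0 n ω)] at h2
    exact (ENNReal.ofReal_le_iff_le_toReal h3).1 h2
  have hset : ∀ ω, {c : ℝ | ∃ n : ℕ, 1 ≤ n ∧ c = (n : ℝ) ^ (-ε) * K (θ^[n] ω)} =
      Set.range (fun n => f n ω) := fun ω => supSet_eq ε K θ ω
  simp_rw [hset]
  refine ⟨⟨(AEMeasurable.iSup hfm).aestronglyMeasurable, ?_⟩, ?_⟩
  · rw [eLpNorm_lt_top_iff_lintegral_rpow_enorm_lt_top hp0 hpt, htr]
    refine lt_of_le_of_lt (lintegral_mono_ae ?_) hFint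
    filter_upwards [hFfin] with ω hω
    have h3 : (∑' n, ‖f n ω‖ₑ ^ d) ^ (1 / d) ≠ ⊤ :=
      ENNReal.rpow_ne_top_of_nonneg (by positivity) hω.ne
    have h4 : sSup (Set.range (fun n => f n ω)) ≤ ((∑' n, ‖f n ω‖ₑ ^ d) ^ (1 / d)).toReal :=
      ciSup_le (key ω hω)
    have h5 : 0 ≤ sSup (Set.range (fun n => f n ω)) :=
      Real.sSup_nonneg (by rintro _ ⟨n, rfl⟩; exact hf0 n ω)
    rw [← ENNReal.le_rpow_inv_iff hd0, ← one_div, Real.enorm_of_nonneg h5]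
    exact (ENNReal.ofReal_le_iff_le_toReal h3).2 h4
  · filter_upwards [hFfin] with ω hω n hn
    obtain ⟨m, rfl⟩ : ∃ m, n = m + 1 := ⟨n - 1, by omega⟩
    exact le_csSup ⟨_, by rintro _ ⟨k, rfl⟩; exact key ω hω k⟩ ⟨m, rfl⟩

theorem exp_bound (κ κ' : ℝ) (hκ' : 0 < κ') (h : κ' < κ) :
    ∃ C : ℝ, ∀ n : ℕ, (n : ℝ) * Real.exp (-(n : ℝ) ^ κ) ≤ C * Real.exp (-(n : ℝ) ^ κ') := by
  have hev : ∀ᶠ x : ℝ in atTop, x * Real.exp (-x ^ κ + x ^ κ') ≤ 1 := by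
    have h1 := (isLittleO_log_rpow_atTop (hκ'.trans h)).bound (show (0:ℝ) < 1 / 2 by norm_num)
    have h2 := (tendsto_rpow_atTop (sub_pos.2 h)).eventually_ge_atTop 2
    filter_upwards [h1, h2, eventually_gt_atTop 0] with x hx1 hx2 hx
    have hp : 0 < x ^ κ' := Real.rpow_pos_of_pos hx _
    have e : x ^ κ = x ^ (κ - κ') * x ^ κ' := by
      rw [← Real.rpow_add hx]; ring_nf
    have hk : 0 < x ^ κ := Real.rpow_pos_of_pos hx _
    rw [Real.norm_eq_abs, Real.norm_eq_abs, abs_of_pos hk] at hx1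
    have hx3 := (le_abs_self _).trans hx1
    have : x ^ κ' ≤ x ^ κ / 2 := by nlinarith
    calc x * Real.exp (-x ^ κ + x ^ κ')
        = Real.exp (Real.log x + (-x ^ κ + x ^ κ')) := by rw [Real.exp_add (Real.log x), Real.exp_log hx]
      _ ≤ 1 := Real.exp_le_one_iff.2 (by linarith)
  have hev' : ∀ᶠ n : ℕ in atTop, (n : ℝ) * Real.exp (-(n : ℝ) ^ κ + (n : ℝ) ^ κ') ≤ 1 :=
    tendsto_natCast_atTop_atTop.eventually hev
  have hb : IsBoundedUnder (· ≤ ·) atTop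
    (fun n : ℕ => (n : ℝ) * Real.exp (-(n : ℝ) ^ κ + (n : ℝ) ^ κ')) := ⟨1, hev'⟩
  obtain ⟨C, hC⟩ := hb.bddAbove_range
  refine ⟨C, fun n => ?_⟩
  have := hC ⟨n, rfl⟩
  simp only at this
  calc (n : ℝ) * Real.exp (-(n : ℝ) ^ κ)
      = ((n : ℝ) * Real.exp (-(n : ℝ) ^ κ + (n : ℝ) ^ κ')) * Real.exp (-(n : ℝ) ^ κ') := by
        rw [mul_assoc, ← Real.exp_add]; ring_nf
    _ ≤ _ := by gcongr

/-- **Corollary (from backward to forward effective convergence rates).**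
Suppose that a.s. `sup_x sup_Γ |P_{θ^{−n}ω,n}(x,Γ) − μ_ω(Γ)| ≤ K(ω) a_n`.  Then:
(i) in the polynomial case `a_n = n^{−β}` with `K ∈ L^d`, for every `ε > 1/d` the random
variable `K̃_ε(ω) = sup_{n≥1} n^{−ε} K(θ^n ω)` lies in `L^d` and a.s.
`sup_x sup_Γ |P_{ω,n}(x,Γ) − μ_{θ^n ω}(Γ)| ≤ K̃_ε(ω) n^{−β+ε}`;
(ii) in the stretched exponential case `a_n = e^{−n^κ}` with `K ∈ ⋂_q L^q`, for every
`q > 1` and `κ' < κ` there is `K̃ ∈ L^q` with a.s.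
`sup_x sup_Γ |P_{ω,n}(x,Γ) − μ_{θ^n ω}(Γ)| ≤ K̃(ω) e^{−n^{κ'}}`. -/
theorem forward_effective_rates
    {Ω 𝒳 : Type*} [MeasurableSpace Ω] [MeasurableSpace 𝒳]
    (Pr : Measure Ω) [IsProbabilityMeasure Pr]
    (θ θinv : Ω → Ω)
    (hθ : MeasurePreserving θ Pr Pr) (hθinv : MeasurePreserving θinv Pr Pr)
    (hinv₁ : Function.LeftInverse θinv θ) (hinv₂ : Function.RightInverse θinv θ)
    (Xs : Ω → Set 𝒳) (hXs : MeasurableSet {p : Ω × 𝒳 | p.2 ∈ Xs p.1})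
    (P : Ω → Kernel 𝒳 𝒳) (hPMarkov : ∀ ω, IsMarkovKernel (P ω))
    (hPmeas : ∀ Γ : Set 𝒳, MeasurableSet Γ → Measurable fun p : Ω × 𝒳 => P p.1 p.2 Γ)
    (hPfib : ∀ᵐ ω ∂Pr, ∀ x ∈ Xs ω, P ω x (Xs (θ ω)) = 1)
    (μs : Ω → Measure 𝒳) (hμs : ∀ ω, IsProbabilityMeasure (μs ω))
    (hμs_meas : ∀ Γ : Set 𝒳, MeasurableSet Γ → Measurable fun ω => μs ω Γ) :
    -- (i) polynomial case
    (∀ (β d : ℝ) (K : Ω → ℝ), 0 < β → 1 ≤ d → (∀ ω, 0 ≤ K ω) →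
      MemLp K (ENNReal.ofReal d) Pr →
      (∀ᵐ ω ∂Pr, ∀ n : ℕ, 1 ≤ n →
        ∀ x ∈ Xs (θinv^[n] ω), ∀ Γ : Set 𝒳, MeasurableSet Γ → Γ ⊆ Xs ω →
          |(envKernel θ P n (θinv^[n] ω) x Γ).toReal - (μs ω Γ).toReal|
            ≤ K ω * (n : ℝ) ^ (-β)) →
      ∀ ε : ℝ, 1 / d < ε →
        MemLp (fun ω => sSup {c : ℝ | ∃ n : ℕ, 1 ≤ n ∧ c = (n : ℝ) ^ (-ε) * K (θ^[n] ω)})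
          (ENNReal.ofReal d) Pr ∧
        ∀ᵐ ω ∂Pr, ∀ n : ℕ, 1 ≤ n →
          ∀ x ∈ Xs ω, ∀ Γ : Set 𝒳, MeasurableSet Γ → Γ ⊆ Xs (θ^[n] ω) →
            |(envKernel θ P n ω x Γ).toReal - (μs (θ^[n] ω) Γ).toReal|
              ≤ sSup {c : ℝ | ∃ k : ℕ, 1 ≤ k ∧ c = (k : ℝ) ^ (-ε) * K (θ^[k] ω)}
                  * (n : ℝ) ^ (-β + ε)) ∧
    -- (ii) stretched exponential case
    (∀ (κ : ℝ) (K : Ω → ℝ), 0 < κ → (∀ ω, 0 ≤ K ω) →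
      (∀ q : ℝ, 1 ≤ q → MemLp K (ENNReal.ofReal q) Pr) →
      (∀ᵐ ω ∂Pr, ∀ n : ℕ, 1 ≤ n →
        ∀ x ∈ Xs (θinv^[n] ω), ∀ Γ : Set 𝒳, MeasurableSet Γ → Γ ⊆ Xs ω →
          |(envKernel θ P n (θinv^[n] ω) x Γ).toReal - (μs ω Γ).toReal|
            ≤ K ω * Real.exp (-(n : ℝ) ^ κ)) →
      ∀ q κ' : ℝ, 1 < q → 0 < κ' → κ' < κ →
        ∃ Ktil : Ω → ℝ, MemLp Ktil (ENNReal.ofReal q) Pr ∧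
          ∀ᵐ ω ∂Pr, ∀ n : ℕ, 1 ≤ n →
            ∀ x ∈ Xs ω, ∀ Γ : Set 𝒳, MeasurableSet Γ → Γ ⊆ Xs (θ^[n] ω) →
              |(envKernel θ P n ω x Γ).toReal - (μs (θ^[n] ω) Γ).toReal|
                ≤ Ktil ω * Real.exp (-(n : ℝ) ^ κ')) := by
  have fwd : ∀ (K : Ω → ℝ) (a : ℕ → ℝ), (∀ᵐ ω ∂Pr, ∀ n : ℕ, 1 ≤ n →
        ∀ x ∈ Xs (θinv^[n] ω), ∀ Γ : Set 𝒳, MeasurableSet Γ → Γ ⊆ Xs ω →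
          |(envKernel θ P n (θinv^[n] ω) x Γ).toReal - (μs ω Γ).toReal|
            ≤ K ω * a n) →
      ∀ᵐ ω ∂Pr, ∀ n : ℕ, 1 ≤ n →
          ∀ x ∈ Xs ω, ∀ Γ : Set 𝒳, MeasurableSet Γ → Γ ⊆ Xs (θ^[n] ω) →
            |(envKernel θ P n ω x Γ).toReal - (μs (θ^[n] ω) Γ).toReal|
              ≤ K (θ^[n] ω) * a n := by
    intro K a h
    have h' : ∀ n : ℕ, ∀ᵐ ω ∂Pr, _ := fun n =>
      (hθ.iterate n).quasiMeasurePreserving.ae h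
    filter_upwards [ae_all_iff.2 h'] with ω hω n hn
    have h2 := hω n n hn
    rwa [hinv₁.iterate n ω] at h2
  refine ⟨?_, ?_⟩
  · intro β d K hβ hd hK0 hK h ε hε
    obtain ⟨h1, h2⟩ := sup_memLp Pr θ hθ d ε hd hε K hK0 hK
    refine ⟨h1, ?_⟩
    filter_upwards [h2, fwd K (fun n => (n : ℝ) ^ (-β)) h] with ω hω hf n hn x hx Γ hΓ hΓs
    refine (hf n hn x hx Γ hΓ hΓs).trans ?_
    have hn0 : (0 : ℝ) < n := by exact_mod_cast hn
    have e : K (θ^[n] ω) * (n : ℝ) ^ (-β)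
        = ((n : ℝ) ^ (-ε) * K (θ^[n] ω)) * (n : ℝ) ^ (-β + ε) := by
      have : (n : ℝ) ^ (-β) = (n : ℝ) ^ (-ε) * (n : ℝ) ^ (-β + ε) := by
        rw [← Real.rpow_add hn0]; ring_nf
      rw [this]; ring
    simp only [e]
    exact mul_le_mul_of_nonneg_right (hω n hn) (by positivity)
  · intro κ K hκ hK0 hK h q κ' hq hκ' hlt
    have hq1 : 1 / q < 1 := by rw [div_lt_one (by linarith)]; exact hq
    obtain ⟨h1, h2⟩ := sup_memLp Pr θ hθ q 1 hq.le hq1 K hK0 (hK q hq.le)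
    obtain ⟨C, hC⟩ := exp_bound κ κ' hκ' hlt
    refine ⟨_, h1.mul_const C, ?_⟩
    filter_upwards [h2, fwd K (fun n => Real.exp (-(n : ℝ) ^ κ)) h] with ω hω hf n hn x hx Γ hΓ hΓs
    refine (hf n hn x hx Γ hΓ hΓs).trans ?_
    have hn0 : (0 : ℝ) < n := by exact_mod_cast hn
    have e : K (θ^[n] ω) * Real.exp (-(n : ℝ) ^ κ)
        = ((n : ℝ) ^ (-1 : ℝ) * K (θ^[n] ω)) * ((n : ℝ) * Real.exp (-(n : ℝ) ^ κ)) := by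
      rw [Real.rpow_neg_one]; field_simp
    have hw : 0 ≤ (n : ℝ) ^ (-1 : ℝ) * K (θ^[n] ω) := mul_nonneg (by positivity) (hK0 _)
    simp only [e]
    rw [mul_assoc _ C]
    exact mul_le_mul (hω n hn) (hC n) (by positivity) (hw.trans (hω n hn))


end
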